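/- Over any commutative ring with derivation ∂, the Wronskian V^{0,1,2,3}(u₁,u₂,u₃,u₄) = det(∂ⁱuⱼ)_{0≤i≤3, 1≤j≤4} satisfies the identity Q V^{0,1,2,3} = 3 V^{0,1,2}⌣V^{0,1,3,5} − 3 V^{0,1,3}⌣V^{0,1,2,5} + 3 V^{0,1,5}⌣V^{0,1,2,3}, where Q ψ(a₁,a₂,a₃,b₁,b₂,b₃,b₄) = ψ(a₁,a₂,a₃,ψ(b₁,…,b₄)) − Σ_{i=1}^4 ψ(b₁,…,ψ(a₁,a₂,a₃,bᵢ),…,b₄) and (f⌣g)(u₁,…,u₇) = f(u₁,u₂,u₃)g(u₄,…,u₇) for the generalized Wronskians V^{i₁,…,i_k}(u₁,…,u_k) = det(∂^{i_r}u_s). -/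

import Mathlib

/-- The generalized Wronskian `V^{i₁,…,i_k}(u₁,…,u_k) = det(D^{i_r} u_s)`. -/
def gW {U : Type*} [CommRing U] (D : U → U) {k : ℕ} (idx : Fin k → ℕ)
    (u : Fin k → U) : U :=
  (Matrix.of fun r s : Fin k => D^[idx r] (u s)).det

/-!
Write `V` for `V^{0,1,2,3}`. Expanding `V(a₁, a₂, a₃, v)` along its last column gives `L v` with
`L = A ∂³ - B ∂² + C ∂ - E`, where `A`, `B`, `C`, `E` are the Wronskians `V^{0,1,2}`, `V^{0,1,3}`,
`V^{0,2,3}`, `V^{1,2,3}` of `a`. Hence `Q V = L (V b) - ∑ i, V(b₁, …, L bᵢ, …, b₄)`.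

The sum over the columns of `V` can be traded for a sum over its rows: replacing the columns of `M`
one at a time by those of `N` gives determinants summing to `tr (adj M * N)`, and so does replacing
the rows. In row `r` the replacement is `∂^r (c ∂^m b)`, which the Leibniz rule turns into a
combination of generalized Wronskians of `b`, most of which vanish for having a repeated index.
Relations such as `B = ∂ A` and `∂ C = E + V^{0,2,4}` leave only the terms of the claim.
-/

open Finset Function Matrix

section Vec

variable {α : Type*} {n : ℕ}

theorem update_vecCons_zero (x y : α) (v : Fin n → α) :
    update (vecCons x v) 0 y = vecCons y v :=
  Fin.update_cons_zero (α := fun _ => α) x v y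

theorem update_vecCons_succ (x y : α) (v : Fin n → α) (i : Fin n) :
    update (vecCons x v) i.succ y = vecCons x (update v i y) :=
  (Fin.cons_update (α := fun _ => α) x v i y).symm

end Vec

section Determinant

variable {R n : Type*} [CommRing R] [Fintype n] [DecidableEq n]

theorem sum_det_updateCol_eq_trace_adjugate_mul (M N : Matrix n n R) :
    ∑ j, (M.updateCol j (N.col j)).det = trace (M.adjugate * N) := by
  simp only [← cramer_apply, cramer_eq_adjugate_mulVec]
  rfl

theorem sum_det_updateRow_eq_trace_adjugate_mul (M N : Matrix n n R) :
    ∑ i, (M.updateRow i (N.row i)).det = trace (M.adjugate * N) := by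
  rw [← trace_transpose, transpose_mul, adjugate_transpose, trace_mul_comm,
    ← sum_det_updateCol_eq_trace_adjugate_mul]
  simp only [updateCol_transpose, det_transpose]
  rfl

end Determinant

section Derivation

variable {R A : Type*} [CommSemiring R] [CommSemiring A] [Algebra R A] (d : Derivation R A A)

theorem derivation_prod {ι : Type*} [DecidableEq ι] (s : Finset ι) (f : ι → A) :
    d (∏ i ∈ s, f i) = ∑ i ∈ s, (∏ j ∈ s.erase i, f j) * d (f i) := by
  induction s using Finset.induction_on with
  | empty => simp
  | insert a s ha ih =>
    rw [prod_insert ha, d.leibniz, ih, sum_insert ha, erase_insert ha, smul_eq_mul, smul_eq_mul,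
      mul_sum, add_comm]
    refine congrArg _ (sum_congr rfl fun i hi => ?_)
    have hai : a ≠ i := fun h => ha (h ▸ hi)
    rw [erase_insert_of_ne hai, prod_insert (fun h => ha (mem_of_mem_erase h)), mul_assoc]

theorem derivation_iterate_mul (n : ℕ) (a b : A) :
    d^[n] (a * b) = ∑ p ∈ antidiagonal n, n.choose p.1 * (d^[p.1] a * d^[p.2] b) := by
  induction n with
  | zero => simp
  | succ n ih =>
    rw [sum_antidiagonal_choose_succ_mul fun i j => d^[i] a * d^[j] b]
    simp only [iterate_succ_apply', ih, map_sum, d.leibniz, d.map_natCast, smul_eq_mul, mul_zero,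
      add_zero, mul_add, sum_add_distrib]
    refine congrArg (_ + ·) (sum_congr rfl fun p hp => ?_)
    rw [n.choose_symm_of_eq_add (mem_antidiagonal.1 hp).symm]
    ring

theorem derivation_det {R A n : Type*} [CommSemiring R] [CommRing A] [Algebra R A]
    (d : Derivation R A A) [Fintype n] [DecidableEq n] (M : Matrix n n A) :
    d M.det = ∑ i, (M.updateRow i fun j => d (M i j)).det := by
  have hcol : d M.det = ∑ j, (M.updateCol j ((M.map d).col j)).det := by
    simp only [det_apply, Units.smul_def, map_sum, map_zsmul, derivation_prod, smul_sum]
    rw [sum_comm]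
    refine sum_congr rfl fun j _ => sum_congr rfl fun σ _ => congrArg _ ?_
    rw [← mul_prod_erase univ _ (mem_univ j), updateCol_self, mul_comm]
    refine congrArg (d (M (σ j) j) * ·) (prod_congr rfl fun i hi => ?_)
    rw [updateCol_ne (ne_of_mem_erase hi)]
  rw [hcol, sum_det_updateCol_eq_trace_adjugate_mul, ← sum_det_updateRow_eq_trace_adjugate_mul]
  rfl

end Derivation

section Wronskian

variable {U : Type*} [CommRing U] {k : ℕ}

theorem gW_update_idx (D : U → U) (idx : Fin k → ℕ) (u : Fin k → U) (r : Fin k) (m : ℕ) :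
    gW D (update idx r m) u =
      ((of fun r s => D^[idx r] (u s)).updateRow r fun s => D^[m] (u s)).det := by
  refine congrArg det (Matrix.ext fun i j => ?_)
  rcases eq_or_ne i r with rfl | h <;> simp [*]

theorem gW_update_arg (D : U → U) (idx : Fin k → ℕ) (u : Fin k → U) (s : Fin k) (v : U) :
    gW D idx (update u s v) =
      ((of fun r s => D^[idx r] (u s)).updateCol s fun r => D^[idx r] v).det := by
  refine congrArg det (Matrix.ext fun i j => ?_)
  rcases eq_or_ne j s with rfl | h <;> simp [*]

theorem gW_update_add {F : Type*} [FunLike F U U] [AddMonoidHomClass F U U] (D : F)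
    (idx : Fin k → ℕ) (u : Fin k → U) (s : Fin k) (v w : U) :
    gW D idx (update u s (v + w)) = gW D idx (update u s v) + gW D idx (update u s w) := by
  simp only [gW_update_arg, iterate_map_add, ← det_updateCol_add]
  rfl

theorem gW_update_sub {F : Type*} [FunLike F U U] [AddMonoidHomClass F U U] (D : F)
    (idx : Fin k → ℕ) (u : Fin k → U) (s : Fin k) (v w : U) :
    gW D idx (update u s (v - w)) = gW D idx (update u s v) - gW D idx (update u s w) := by
  rw [eq_sub_iff_add_eq, ← gW_update_add, sub_add_cancel]

theorem gW_eq_zero_of_not_injective (D : U → U) {idx : Fin k → ℕ} (h : ¬ Injective idx)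
    (u : Fin k → U) : gW D idx u = 0 := by
  obtain ⟨i, j, hij, hne⟩ := not_injective_iff.1 h
  exact det_zero_of_row_eq hne (funext fun s => by simp [hij])

theorem gW_eq_neg_of_eq_comp_swap (D : U → U) {idx idx' : Fin k → ℕ} {i j : Fin k} (hij : i ≠ j)
    (h : idx' = idx ∘ Equiv.swap i j) (u : Fin k → U) : gW D idx' u = -gW D idx u := by
  subst h
  simpa [Equiv.Perm.sign_swap hij] using!
    det_permute (Equiv.swap i j) (of fun r s => D^[idx r] (u s))

theorem gW_snoc (D : U → U) (idx : Fin (k + 1) → ℕ) (a : Fin k → U) (v : U) :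
    gW D idx (Fin.snoc a v : Fin (k + 1) → U) =
      ∑ r : Fin (k + 1), (-1) ^ (r + k : ℕ) * D^[idx r] v * gW D (idx ∘ r.succAbove) a := by
  rw [gW, det_succ_column _ (Fin.last k)]
  refine sum_congr rfl fun r _ => ?_
  simp only [of_apply, Fin.snoc_last, Fin.val_last]
  refine congrArg (_ * ·) (congrArg det (Matrix.ext fun i j => ?_))
  simp

variable {R : Type*} [CommSemiring R] [Algebra R U] (d : Derivation R U U)

theorem derivation_gW (idx : Fin k → ℕ) (u : Fin k → U) :
    d (gW d idx u) = ∑ r, gW d (update idx r (idx r + 1)) u := by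
  simp only [gW_update_idx, iterate_succ_apply']
  exact derivation_det d _

theorem sum_gW_update_mul_iterate (idx : Fin k → ℕ) (u : Fin k → U) (c : U) (m : ℕ) :
    ∑ s, gW d idx (update u s (c * d^[m] (u s))) =
      ∑ r, ∑ p ∈ antidiagonal (idx r),
        (idx r).choose p.1 * d^[p.1] c * gW d (update idx r (p.2 + m)) u := by
  set M : Matrix (Fin k) (Fin k) U := of fun r s => d^[idx r] (u s)
  set N : Matrix (Fin k) (Fin k) U := of fun r s => d^[idx r] (c * d^[m] (u s))
  have hN (r : Fin k) : N.row r = ∑ p ∈ antidiagonal (idx r),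
      ((idx r).choose p.1 * d^[p.1] c) • fun s => d^[p.2 + m] (u s) := by
    ext s
    simp [N, derivation_iterate_mul, iterate_add_apply, mul_assoc]
  calc ∑ s, gW d idx (update u s (c * d^[m] (u s)))
      = ∑ s, (M.updateCol s (N.col s)).det := by simp only [gW_update_arg]; rfl
    _ = ∑ r, (M.updateRow r (N.row r)).det := by
      rw [sum_det_updateCol_eq_trace_adjugate_mul, sum_det_updateRow_eq_trace_adjugate_mul]
    _ = _ := by
      simp only [hN, gW_update_idx, ← cramer_transpose_apply, map_sum, map_smul, Finset.sum_apply,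
        Pi.smul_apply, smul_eq_mul, M]

end Wronskian

section WronskianFour

variable {U : Type*} [CommRing U]

theorem gW_four_swap_one_two (D : U → U) (i j k l : ℕ) (u : Fin 4 → U) :
    gW D ![i, k, j, l] u = -gW D ![i, j, k, l] u :=
  gW_eq_neg_of_eq_comp_swap (i := 1) (j := 2) D (by decide)
    (funext fun t => by fin_cases t <;> rfl) u

theorem gW_four_swap_two_three (D : U → U) (i j k l : ℕ) (u : Fin 4 → U) :
    gW D ![i, j, l, k] u = -gW D ![i, j, k, l] u :=
  gW_eq_neg_of_eq_comp_swap (i := 2) (j := 3) D (by decide)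
    (funext fun t => by fin_cases t <;> rfl) u

theorem gW_four_snoc (D : U → U) (i j k l : ℕ) (a : Fin 3 → U) (v : U) :
    gW D ![i, j, k, l] (Fin.snoc a v : Fin 4 → U) =
      gW D ![i, j, k] a * D^[l] v - gW D ![i, j, l] a * D^[k] v
        + gW D ![i, k, l] a * D^[j] v - gW D ![j, k, l] a * D^[i] v := by
  have h0 : ![i, j, k, l] ∘ (0 : Fin 4).succAbove = ![j, k, l] :=
    funext fun t => by fin_cases t <;> rfl
  have h1 : ![i, j, k, l] ∘ (1 : Fin 4).succAbove = ![i, k, l] :=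
    funext fun t => by fin_cases t <;> rfl
  have h2 : ![i, j, k, l] ∘ (2 : Fin 4).succAbove = ![i, j, l] :=
    funext fun t => by fin_cases t <;> rfl
  have h3 : ![i, j, k, l] ∘ (3 : Fin 4).succAbove = ![i, j, k] :=
    funext fun t => by fin_cases t <;> rfl
  rw [gW_snoc, Fin.sum_univ_four, h0, h1, h2, h3]
  change (-1) ^ (0 + 3) * D^[i] v * _ + (-1) ^ (1 + 3) * D^[j] v * _
    + (-1) ^ (2 + 3) * D^[k] v * _ + (-1) ^ (3 + 3) * D^[l] v * _ = _
  ring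

variable {R : Type*} [CommSemiring R] [Algebra R U] (d : Derivation R U U)

theorem derivation_gW_012 (a : Fin 3 → U) :
    d (gW d ![0, 1, 2] a) = gW d ![0, 1, 3] a := by
  simp (disch := decide) [derivation_gW, Fin.sum_univ_succ, update_vecCons_zero,
    update_vecCons_succ, gW_eq_zero_of_not_injective]

theorem derivation_gW_013 (a : Fin 3 → U) :
    d (gW d ![0, 1, 3] a) = gW d ![0, 2, 3] a + gW d ![0, 1, 4] a := by
  simp (disch := decide) [derivation_gW, Fin.sum_univ_succ, update_vecCons_zero,
    update_vecCons_succ, gW_eq_zero_of_not_injective]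

theorem derivation_gW_023 (a : Fin 3 → U) :
    d (gW d ![0, 2, 3] a) = gW d ![1, 2, 3] a + gW d ![0, 2, 4] a := by
  simp (disch := decide) [derivation_gW, Fin.sum_univ_succ, update_vecCons_zero,
    update_vecCons_succ, gW_eq_zero_of_not_injective]

theorem derivation_gW_014 (a : Fin 3 → U) :
    d (gW d ![0, 1, 4] a) = gW d ![0, 2, 4] a + gW d ![0, 1, 5] a := by
  simp (disch := decide) [derivation_gW, Fin.sum_univ_succ, update_vecCons_zero,
    update_vecCons_succ, gW_eq_zero_of_not_injective]

theorem derivation_gW_0123 (b : Fin 4 → U) :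
    d (gW d ![0, 1, 2, 3] b) = gW d ![0, 1, 2, 4] b := by
  simp (disch := decide) [derivation_gW, Fin.sum_univ_succ, update_vecCons_zero,
    update_vecCons_succ, gW_eq_zero_of_not_injective]

theorem derivation_gW_0124 (b : Fin 4 → U) :
    d (gW d ![0, 1, 2, 4] b) = gW d ![0, 1, 3, 4] b + gW d ![0, 1, 2, 5] b := by
  simp (disch := decide) [derivation_gW, Fin.sum_univ_succ, update_vecCons_zero,
    update_vecCons_succ, gW_eq_zero_of_not_injective]

theorem derivation_gW_0134 (b : Fin 4 → U) :
    d (gW d ![0, 1, 3, 4] b) = gW d ![0, 2, 3, 4] b + gW d ![0, 1, 3, 5] b := by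
  simp (disch := decide) [derivation_gW, Fin.sum_univ_succ, update_vecCons_zero,
    update_vecCons_succ, gW_eq_zero_of_not_injective]

theorem derivation_gW_0125 (b : Fin 4 → U) :
    d (gW d ![0, 1, 2, 5] b) = gW d ![0, 1, 3, 5] b + gW d ![0, 1, 2, 6] b := by
  simp (disch := decide) [derivation_gW, Fin.sum_univ_succ, update_vecCons_zero,
    update_vecCons_succ, gW_eq_zero_of_not_injective]

theorem derivation_iterate_two_gW_013 (a : Fin 3 → U) :
    d^[2] (gW d ![0, 1, 3] a) =
      gW d ![1, 2, 3] a + 2 * gW d ![0, 2, 4] a + gW d ![0, 1, 5] a := by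
  rw [iterate_succ_apply, iterate_one, derivation_gW_013, map_add, derivation_gW_023,
    derivation_gW_014]
  ring

theorem derivation_iterate_two_gW_0123 (b : Fin 4 → U) :
    d^[2] (gW d ![0, 1, 2, 3] b) = gW d ![0, 1, 3, 4] b + gW d ![0, 1, 2, 5] b := by
  rw [iterate_succ_apply, iterate_one, derivation_gW_0123, derivation_gW_0124]

theorem derivation_iterate_three_gW_0123 (b : Fin 4 → U) :
    d^[3] (gW d ![0, 1, 2, 3] b) =
      gW d ![0, 2, 3, 4] b + 2 * gW d ![0, 1, 3, 5] b + gW d ![0, 1, 2, 6] b := by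
  rw [iterate_succ_apply', derivation_iterate_two_gW_0123, map_add, derivation_gW_0134,
    derivation_gW_0125]
  ring

theorem sum_gW_0123_update_mul_iterate (b : Fin 4 → U) (c : U) (m : ℕ) :
    ∑ i, gW d ![0, 1, 2, 3] (update b i (c * d^[m] (b i))) =
      c * (gW d ![m, 1, 2, 3] b + gW d ![0, m + 1, 2, 3] b + gW d ![0, 1, m + 2, 3] b
          + gW d ![0, 1, 2, m + 3] b)
        + d c * (gW d ![0, m, 2, 3] b + 2 * gW d ![0, 1, m + 1, 3] b
          + 3 * gW d ![0, 1, 2, m + 2] b)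
        + d^[2] c * (gW d ![0, 1, m, 3] b + 3 * gW d ![0, 1, 2, m + 1] b)
        + d^[3] c * gW d ![0, 1, 2, m] b := by
  rw [sum_gW_update_mul_iterate]
  simp only [Fin.sum_univ_succ, univ_eq_empty, sum_empty, update_vecCons_zero,
    update_vecCons_succ, cons_val_zero, cons_val_succ, Finset.Nat.sum_antidiagonal_succ,
    Finset.Nat.antidiagonal_zero, sum_singleton, Nat.choose, iterate_succ_apply',
    iterate_zero_apply, Nat.reduceAdd, zero_add, add_comm m]
  push_cast
  ring

theorem sum_gW_0123_update_mul_iterate_zero (b : Fin 4 → U) (c : U) :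
    ∑ i, gW d ![0, 1, 2, 3] (update b i (c * d^[0] (b i))) = 4 * (c * gW d ![0, 1, 2, 3] b) := by
  rw [sum_gW_0123_update_mul_iterate]
  simp (disch := decide) only [gW_eq_zero_of_not_injective, zero_add]
  ring

theorem sum_gW_0123_update_mul_iterate_one (b : Fin 4 → U) (c : U) :
    ∑ i, gW d ![0, 1, 2, 3] (update b i (c * d^[1] (b i))) =
      c * gW d ![0, 1, 2, 4] b + 6 * (d c * gW d ![0, 1, 2, 3] b) := by
  rw [sum_gW_0123_update_mul_iterate]
  simp (disch := decide) only [gW_eq_zero_of_not_injective, Nat.reduceAdd]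
  ring

theorem sum_gW_0123_update_mul_iterate_two (b : Fin 4 → U) (c : U) :
    ∑ i, gW d ![0, 1, 2, 3] (update b i (c * d^[2] (b i))) =
      c * (gW d ![0, 1, 2, 5] b - gW d ![0, 1, 3, 4] b)
        + 3 * (d c * gW d ![0, 1, 2, 4] b) + 4 * (d^[2] c * gW d ![0, 1, 2, 3] b) := by
  rw [sum_gW_0123_update_mul_iterate]
  simp (disch := decide) only [gW_eq_zero_of_not_injective, Nat.reduceAdd]
  rw [gW_four_swap_two_three d 0 1 3 4]
  ring

theorem sum_gW_0123_update_mul_iterate_three (b : Fin 4 → U) (c : U) :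
    ∑ i, gW d ![0, 1, 2, 3] (update b i (c * d^[3] (b i))) =
      c * (gW d ![0, 1, 2, 6] b - gW d ![0, 1, 3, 5] b + gW d ![0, 2, 3, 4] b)
        + d c * (3 * gW d ![0, 1, 2, 5] b - 2 * gW d ![0, 1, 3, 4] b)
        + 3 * (d^[2] c * gW d ![0, 1, 2, 4] b) + d^[3] c * gW d ![0, 1, 2, 3] b := by
  rw [sum_gW_0123_update_mul_iterate]
  simp (disch := decide) only [gW_eq_zero_of_not_injective, Nat.reduceAdd]
  rw [gW_four_swap_two_three d 0 1 3 5, gW_four_swap_two_three d 0 1 3 4,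
    gW_four_swap_one_two d 0 2 4 3, gW_four_swap_two_three d 0 2 3 4]
  ring

end WronskianFour

theorem exists_derivation_coe_eq {A : Type*} [CommRing A] {D : A → A}
    (hadd : ∀ a b, D (a + b) = D a + D b) (hleib : ∀ a b, D (a * b) = D a * b + a * D b) :
    ∃ d : Derivation ℤ A A, ⇑d = D := by
  refine ⟨.mk' (AddMonoidHom.mk' D hadd).toIntLinearMap fun a b => ?_, rfl⟩
  simp [hleib, add_comm, mul_comm]

/-- Over any commutative ring with derivation `D`, the Wronskian `V^{0,1,2,3}`
satisfies `Q V^{0,1,2,3} = 3 V^{0,1,2}⌣V^{0,1,3,5} − 3 V^{0,1,3}⌣V^{0,1,2,5}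
+ 3 V^{0,1,5}⌣V^{0,1,2,3}`. -/
theorem stmt_9 (U : Type*) [CommRing U] (D : U → U)
    (hadd : ∀ a b : U, D (a + b) = D a + D b)
    (hleib : ∀ a b : U, D (a * b) = D a * b + a * D b) :
    ∀ (a : Fin 3 → U) (b : Fin 4 → U),
      gW D ![0, 1, 2, 3] (Fin.snoc a (gW D ![0, 1, 2, 3] b))
        - ∑ i : Fin 4, gW D ![0, 1, 2, 3]
            (Function.update b i (gW D ![0, 1, 2, 3] (Fin.snoc a (b i))))
      = 3 * (gW D ![0, 1, 2] a * gW D ![0, 1, 3, 5] b)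
        - 3 * (gW D ![0, 1, 3] a * gW D ![0, 1, 2, 5] b)
        + 3 * (gW D ![0, 1, 5] a * gW D ![0, 1, 2, 3] b) := by
  intro a b
  obtain ⟨d, rfl⟩ := exists_derivation_coe_eq hadd hleib
  have hA₂ : d^[2] (gW d ![0, 1, 2] a) = d (gW d ![0, 1, 3] a) := by
    rw [iterate_succ_apply, iterate_one, derivation_gW_012]
  have hA₃ : d^[3] (gW d ![0, 1, 2] a) = d^[2] (gW d ![0, 1, 3] a) := by
    rw [iterate_succ_apply, derivation_gW_012]
  simp only [gW_four_snoc, gW_update_add, gW_update_sub, sum_add_distrib, sum_sub_distrib]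
  rw [sum_gW_0123_update_mul_iterate_three, sum_gW_0123_update_mul_iterate_two,
    sum_gW_0123_update_mul_iterate_one, sum_gW_0123_update_mul_iterate_zero,
    derivation_iterate_three_gW_0123, derivation_iterate_two_gW_0123]
  simp only [iterate_one, iterate_zero_apply, derivation_gW_0123, derivation_gW_012,
    derivation_gW_023, derivation_iterate_two_gW_013, hA₂, hA₃]
  ring
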